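/- Let n be a positive integer. There exist a field K of characteristic zero and an associative unital K-algebra A which is a division ring with center equal to K and of dimension 9 over K, such that the group Aˣ/Kˣ contains an element of order n, if and only if n is not divisible by 9 and every prime divisor of n is either 3 or congruent to 1 modulo 3. -/

import Mathlib

/-- The central subgroup `Kˣ ⊆ Aˣ`: the units of `A` lying in the image of the structure map
`K → A`. -/
def centralUnits (K A : Type*) [Field K] [DivisionRing A] [Algebra K A] : Subgroup Aˣ :=
  (Units.map (algebraMap K A).toMonoidHom).range

instance centralUnits_normal (K A : Type*) [Field K] [DivisionRing A] [Algebra K A] :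
    (centralUnits K A).Normal := by
  constructor
  intro x hx g
  obtain ⟨k, hk⟩ := hx
  have hx' : (x : A) = algebraMap K A (k : K) := by rw [← hk]; rfl
  have h1 : g * x = x * g := by
    apply Units.ext
    rw [Units.val_mul, Units.val_mul, hx']
    exact (Algebra.commutes (k : K) (g : A)).symm
  have h2 : g * x * g⁻¹ = x := by rw [h1, mul_inv_cancel_right]
  rw [h2]
  exact ⟨k, hk⟩

/-- A central division algebra of dimension `9` over a field `K` of characteristic zero:
the data of a field `K` of characteristic zero and an associative unital `K`-algebra `A`
which is a division ring, has center equal to `K`, and has dimension `9` over `K`. Such an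
algebra corresponds to a non-trivial Severi–Brauer surface `S` over `K`, with
`Aut(S) ≅ Aˣ/Kˣ`. -/
structure CentralDivAlgChar0 where
  K : Type
  A : Type
  [fieldK : Field K]
  [charZeroK : CharZero K]
  [divisionRingA : DivisionRing A]
  [algebraKA : Algebra K A]
  center_eq_bot : Subalgebra.center K A = ⊥
  finrank_eq_nine : Module.finrank K A = 9

attribute [instance] CentralDivAlgChar0.fieldK CentralDivAlgChar0.charZeroK
  CentralDivAlgChar0.divisionRingA CentralDivAlgChar0.algebraKA

/-- The quotient group `Aˣ/Kˣ`, isomorphic to the automorphism group of the corresponding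
Severi–Brauer surface. -/
abbrev CentralDivAlgChar0.Q (D : CentralDivAlgChar0) : Type :=
  (D.A)ˣ ⧸ centralUnits D.K D.A

/-!
Let `ℓ` be an odd prime and `A` a central division algebra of degree `ℓ` over `K`. Every `y` outside
`K` has a minimal polynomial of degree `ℓ`. Suppose that `y ^ p` lies in `K` for a prime `p`. If
`y ^ p` is not a `p`-th power in `K`, then `X ^ p - y ^ p` is irreducible and `p = ℓ`. Otherwise
rescaling `y` gives a `p`-th root of unity outside `K`, whose degree `ℓ` divides `p - 1`. The same
argument with `X ^ (ℓ ^ 2) - y ^ (ℓ ^ 2)` in place of `X ^ p - y ^ p` rules out orders divisible by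
`ℓ ^ 2`.

Conversely, let `σ` generate the Galois group of a cyclic extension `L / k` of degree `ℓ`, and let
`ζ` be an element of `L` of norm `1`. By Hilbert's Theorem 90, `ζ = x / σ x`. In the cyclic algebra
generated over `L((t))` by `u` with `u a = σ(a) u` and `u ^ ℓ = t`, which is a division algebra
because the `t`-adic valuations of the terms `a u ^ i` lie in distinct classes, `x ^ j` is central
exactly when `ζ ^ j = 1`. For `ζ` a primitive `n`-th root of unity and `σ ζ = ζ ^ s`, the norm
condition is `1 + s + ⋯ + s ^ (ℓ - 1) = 0` modulo `n`. It is solved modulo prime powers, by `s = 1`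
modulo `ℓ` and by an `s` of multiplicative order `ℓ` modulo a power of a prime `p ≡ 1 mod ℓ`.
-/

namespace CentralDivisionAlgebra

/-! ### Elements of finite order in prime degree -/

section AdjoinSingleton

variable {K A : Type*} [Field K] [Ring A] [Algebra K A]

open scoped IsMulCommutative

theorem adjoin_self_mem_adjoin_singleton_eq_top (y : A) :
    Algebra.adjoin K {(⟨y, Algebra.self_mem_adjoin_singleton K y⟩ : Algebra.adjoin K {y})} = ⊤ := by
  convert Algebra.adjoin_adjoin_coe_preimage (R := K) (s := {y}) using 2
  ext
  simp [Subtype.ext_iff]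

theorem finrank_adjoin_singleton {y : A} (hy : IsIntegral K y) :
    Module.finrank K (Algebra.adjoin K {y}) = (minpoly K y).natDegree := by
  let S := Algebra.adjoin K {y}
  let y' : S := ⟨y, Algebra.self_mem_adjoin_singleton K y⟩
  have hminpoly : minpoly K y' = minpoly K y :=
    (minpoly.algHom_eq S.val Subtype.val_injective y').symm
  have hy' : IsIntegral K y' := (isIntegral_algHom_iff S.val Subtype.val_injective).1 hy
  have htop : Algebra.adjoin K {y'} = ⊤ := adjoin_self_mem_adjoin_singleton_eq_top y
  rw [(PowerBasis.ofAdjoinEqTop hy' htop).finrank, PowerBasis.ofAdjoinEqTop_dim, hminpoly]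

end AdjoinSingleton

theorem finrank_dvd_totient (K L : Type*) [Field K] [Field L] [Algebra K L] (n : ℕ) [NeZero n]
    [IsCyclotomicExtension {n} K L] : Module.finrank K L ∣ n.totient := by
  have := IsCyclotomicExtension.isGalois {n} K L
  have := IsCyclotomicExtension.finiteDimensional {n} K L
  rw [← IsGalois.card_aut_eq_finrank, ← ZMod.card_units_eq_totient, ← Nat.card_eq_fintype_card]
  exact Subgroup.card_dvd_of_injective _
    ((IsCyclotomicExtension.zeta_spec n K L).autToPow_injective K)

section Obstruction

variable {K A : Type*} [Field K] [DivisionRing A] [Algebra K A]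

theorem finrank_subalgebra_dvd_finrank [FiniteDimensional K A] (S : Subalgebra K A) :
    Module.finrank K S ∣ Module.finrank K A :=
  letI := divisionRingOfFiniteDimensional K S
  ⟨_, (Module.finrank_mul_finrank K S A).symm⟩

theorem natDegree_minpoly_dvd_finrank [FiniteDimensional K A] (y : A) :
    (minpoly K y).natDegree ∣ Module.finrank K A :=
  finrank_adjoin_singleton (.of_finite K y) ▸ finrank_subalgebra_dvd_finrank _

theorem natDegree_minpoly_ne_finrank (hc : Subalgebra.center K A = ⊥)
    (h1 : 1 < Module.finrank K A) (y : A) :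
    (minpoly K y).natDegree ≠ Module.finrank K A := by
  have : FiniteDimensional K A := .of_finrank_pos (by lia)
  intro h
  have htop : Algebra.adjoin K {y} = ⊤ := Subalgebra.eq_of_le_of_finrank_eq le_top <| by
    rw [finrank_adjoin_singleton (.of_finite K y), h,
      subalgebra_top_finrank_eq_submodule_top_finrank, finrank_top]
  have hcomm : IsMulCommutative (⊤ : Subalgebra K A) := htop ▸ inferInstance
  have hcenter : Subalgebra.center K A = ⊤ := eq_top_iff.2 fun a _ ↦
    Subalgebra.mem_center_iff.2 fun b ↦ setLike_mul_comm (Algebra.mem_top (R := K)) Algebra.mem_top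
  exact h1.ne' (Subalgebra.bot_eq_top_iff_finrank_eq_one.1 (hc.symm.trans hcenter))

open scoped IsMulCommutative in
theorem natDegree_minpoly_dvd_totient_orderOf [FiniteDimensional K A] {z : A}
    (hz : IsOfFinOrder z) : (minpoly K z).natDegree ∣ (orderOf z).totient := by
  let S := Algebra.adjoin K {z}
  let _ : Field S := fieldOfFiniteDimensional K S
  let z' : S := ⟨z, Algebra.self_mem_adjoin_singleton K z⟩
  have : NeZero (orderOf z) := ⟨hz.orderOf_pos.ne'⟩
  have hz' : IsPrimitiveRoot z' (orderOf z) :=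
    orderOf_injective (S.val : S →* A) Subtype.val_injective z' ▸ .orderOf z'
  have htop : Algebra.adjoin K {z'} = ⊤ := adjoin_self_mem_adjoin_singleton_eq_top z
  have := hz'.adjoin_isCyclotomicExtension K
  have : IsCyclotomicExtension {orderOf z} K S := .equiv _ K (Algebra.adjoin K {z'})
    ((Subalgebra.equivOfEq _ _ htop).trans Subalgebra.topEquiv)
  exact finrank_adjoin_singleton (.of_finite K z) ▸ finrank_dvd_totient K S (orderOf z)

open Polynomial in
theorem natDegree_minpoly_of_irreducible_X_pow_sub_C {y : A} {n : ℕ} (hn : n ≠ 0) {b : K}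
    (hirr : Irreducible (X ^ n - C b)) (hy : y ^ n = algebraMap K A b) :
    (minpoly K y).natDegree = n := by
  rw [← minpoly.eq_of_irreducible_of_monic hirr (by simp [hy]) (monic_X_pow_sub_C b hn),
    natDegree_X_pow_sub_C]

theorem exists_pow_eq_one_of_pow_eq {y : A} (hy : y ∉ (algebraMap K A).range) {n : ℕ}
    (hn : n ≠ 0) {c : K} (hyc : y ^ n = algebraMap K A (c ^ n)) :
    ∃ z : A, z ∉ (algebraMap K A).range ∧ z ^ n = 1 := by
  have hc : algebraMap K A c ≠ 0 := by
    intro hc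
    rw [map_pow, hc, zero_pow hn] at hyc
    exact hy (eq_zero_of_pow_eq_zero hyc ▸ zero_mem _)
  refine ⟨algebraMap K A c⁻¹ * y, fun hz ↦ hy ?_, ?_⟩
  · have := mul_mem (RingHom.mem_range_self (algebraMap K A) c) hz
    rwa [map_inv₀, mul_inv_cancel_left₀ hc] at this
  · rw [Commute.mul_pow (Algebra.commutes _ y), hyc, map_pow, map_inv₀, inv_pow,
      inv_mul_cancel₀ (pow_ne_zero n hc)]

theorem mk_pow_eq_one_iff (x : Aˣ) (k : ℕ) :
    (QuotientGroup.mk x : Aˣ ⧸ centralUnits K A) ^ k = 1 ↔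
      (x : A) ^ k ∈ (algebraMap K A).range := by
  rw [← QuotientGroup.mk_pow, QuotientGroup.eq_one_iff, ← Units.val_pow_eq_pow_val]
  refine ⟨fun ⟨c, hc⟩ ↦ ⟨c, congrArg Units.val hc⟩, fun ⟨c, hc⟩ ↦ ?_⟩
  have hc0 : c ≠ 0 := fun h ↦ (x ^ k).ne_zero (by rw [← hc, h, map_zero])
  exact ⟨Units.mk0 c hc0, Units.ext hc⟩

theorem pow_mem_range_iff_orderOf_dvd (x : Aˣ) (k : ℕ) :
    (x : A) ^ k ∈ (algebraMap K A).range ↔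
      orderOf (QuotientGroup.mk x : Aˣ ⧸ centralUnits K A) ∣ k := by
  rw [orderOf_dvd_iff_pow_eq_one, mk_pow_eq_one_iff]

section PrimeDegree

variable {ℓ : ℕ} (hℓ : ℓ.Prime) (hc : Subalgebra.center K A = ⊥)
  (hdim : Module.finrank K A = ℓ ^ 2)
include hℓ hc hdim

theorem natDegree_minpoly_eq {y : A} (hy : y ∉ (algebraMap K A).range) :
    (minpoly K y).natDegree = ℓ := by
  have h1 : 1 < Module.finrank K A := hdim ▸ Nat.one_lt_pow two_ne_zero hℓ.one_lt
  have : FiniteDimensional K A := .of_finrank_pos (by lia)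
  obtain ⟨k, hk, hdeg⟩ := (Nat.dvd_prime_pow hℓ).1 (hdim ▸ natDegree_minpoly_dvd_finrank y)
  have hk0 : k ≠ 0 := by
    rintro rfl
    exact hy (minpoly.natDegree_eq_one_iff.1 hdeg)
  have hk2 : k ≠ 2 := by
    rintro rfl
    exact natDegree_minpoly_ne_finrank hc h1 y (hdeg.trans hdim.symm)
  rw [hdeg, show k = 1 by lia, pow_one]

theorem mod_eq_one_of_pow_prime_eq_one {z : A} (hz : z ∉ (algebraMap K A).range) {p : ℕ}
    (hp : p.Prime) (hzp : z ^ p = 1) : p % ℓ = 1 := by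
  have : FiniteDimensional K A := .of_finrank_pos (by simp [hdim, hℓ.pos])
  have : Fact p.Prime := ⟨hp⟩
  have horder : orderOf z = p := orderOf_eq_prime hzp fun h ↦ hz (h ▸ one_mem _)
  have hdvd : ℓ ∣ p - 1 := by
    rw [← natDegree_minpoly_eq hℓ hc hdim hz, ← Nat.totient_prime hp, ← horder]
    exact natDegree_minpoly_dvd_totient_orderOf (orderOf_pos_iff.1 (horder ▸ hp.pos))
  rw [← Nat.mod_eq_of_lt hℓ.one_lt]
  exact ((Nat.modEq_iff_dvd' hp.one_lt.le).2 hdvd).symm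

theorem eq_or_mod_eq_one_of_pow_prime_mem {y : A} (hy : y ∉ (algebraMap K A).range) {p : ℕ}
    (hp : p.Prime) (hyp : y ^ p ∈ (algebraMap K A).range) : p = ℓ ∨ p % ℓ = 1 := by
  obtain ⟨b, hb⟩ := hyp
  by_cases hroot : ∃ c : K, c ^ p = b
  · obtain ⟨c, rfl⟩ := hroot
    obtain ⟨z, hz, hzp⟩ := exists_pow_eq_one_of_pow_eq hy hp.ne_zero hb.symm
    exact .inr (mod_eq_one_of_pow_prime_eq_one hℓ hc hdim hz hp hzp)
  · have hirr := X_pow_sub_C_irreducible_of_prime hp (not_exists.1 hroot)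
    exact .inl ((natDegree_minpoly_of_irreducible_X_pow_sub_C hp.ne_zero hirr hb.symm).symm.trans
      (natDegree_minpoly_eq hℓ hc hdim hy))

theorem pow_mem_of_pow_sq_mem (hodd : ℓ ≠ 2) {y : A} (hy : y ^ ℓ ^ 2 ∈ (algebraMap K A).range) :
    y ^ ℓ ∈ (algebraMap K A).range := by
  by_contra hyℓ
  obtain ⟨b, hb⟩ := hy
  by_cases hroot : ∃ c : K, c ^ ℓ = b
  · obtain ⟨c, rfl⟩ := hroot
    rw [sq, pow_mul] at hb
    obtain ⟨z, hz, hzℓ⟩ := exists_pow_eq_one_of_pow_eq hyℓ hℓ.ne_zero hb.symm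
    simpa using mod_eq_one_of_pow_prime_eq_one hℓ hc hdim hz hℓ hzℓ
  · have hirr := X_pow_sub_C_irreducible_of_prime_pow hℓ hodd 2 (not_exists.1 hroot)
    have hdeg := natDegree_minpoly_of_irreducible_X_pow_sub_C (by simp [hℓ.ne_zero]) hirr hb.symm
    rw [natDegree_minpoly_eq hℓ hc hdim fun h ↦ hyℓ (pow_mem h ℓ), eq_comm,
      Nat.pow_eq_self_iff hℓ.one_lt] at hdeg
    contradiction

theorem not_sq_dvd_orderOf (hodd : ℓ ≠ 2) {g : Aˣ ⧸ centralUnits K A} (hg : IsOfFinOrder g) :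
    ¬ ℓ ^ 2 ∣ orderOf g := by
  obtain ⟨x, rfl⟩ := QuotientGroup.mk_surjective g
  rintro ⟨m, hm⟩
  have hm0 : 0 < m := Nat.pos_of_mul_pos_left (hm ▸ hg.orderOf_pos)
  have hmem : (x : A) ^ (m * ℓ) ∈ (algebraMap K A).range := by
    rw [pow_mul]
    refine pow_mem_of_pow_sq_mem hℓ hc hdim hodd ?_
    rw [← pow_mul, pow_mem_range_iff_orderOf_dvd, hm, mul_comm]
  rw [pow_mem_range_iff_orderOf_dvd, hm] at hmem
  have hle := Nat.le_of_dvd (Nat.mul_pos hm0 hℓ.pos) hmem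
  nlinarith [hℓ.two_le, Nat.mul_pos hm0 hℓ.pos]

theorem eq_or_mod_eq_one_of_dvd_orderOf {g : Aˣ ⧸ centralUnits K A} (hg : IsOfFinOrder g) {p : ℕ}
    (hp : p.Prime) (hpg : p ∣ orderOf g) : p = ℓ ∨ p % ℓ = 1 := by
  obtain ⟨x, rfl⟩ := QuotientGroup.mk_surjective g
  obtain ⟨m, hm⟩ := hpg
  have hm0 : 0 < m := Nat.pos_of_mul_pos_left (hm ▸ hg.orderOf_pos)
  refine eq_or_mod_eq_one_of_pow_prime_mem (y := (x : A) ^ m) hℓ hc hdim ?_ hp ?_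
  · rw [pow_mem_range_iff_orderOf_dvd, hm]
    exact Nat.not_dvd_of_pos_of_lt hm0 (lt_mul_left hm0 hp.one_lt)
  · rw [← pow_mul, pow_mem_range_iff_orderOf_dvd, hm, mul_comm]

end PrimeDegree

end Obstruction

/-! ### Crossed products -/

/-- A normalized factor set of a group `G` acting on a field `F`: a normalized
2-cocycle with values in `F`, which here need not be nonzero. -/
structure FactorSet (G F : Type*) [Group G] [Field F] [MulSemiringAction G F] where
  toFun : G → G → F
  cocycle' (g h k : G) : toFun (g * h) k * toFun g h = g • toFun h k * toFun g (h * k)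
  map_one_left' (g : G) : toFun 1 g = 1
  map_one_right' (g : G) : toFun g 1 = 1

namespace FactorSet

variable {G F : Type*} [Group G] [Field F] [MulSemiringAction G F] (c : FactorSet G F)

instance : CoeFun (FactorSet G F) fun _ ↦ G → G → F := ⟨toFun⟩

theorem cocycle (g h k : G) : c (g * h) k * c g h = g • c h k * c g (h * k) :=
  c.cocycle' g h k

@[simp] theorem map_one_left (g : G) : c 1 g = 1 := c.map_one_left' g

@[simp] theorem map_one_right (g : G) : c g 1 = 1 := c.map_one_right' g

end FactorSet

/-- The crossed product algebra of `G` and `F` with factor set `c`. The function `x` stands for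
`∑ g, x g * u g`, where the symbols `u g` multiply by the rules `u g * a = (g • a) * u g` for
`a : F` and `u g * u h = c g h * u (g * h)`. -/
def CrossedProduct {G F : Type*} [Group G] [Field F] [MulSemiringAction G F]
    (_ : FactorSet G F) : Type _ :=
  G → F

namespace CrossedProduct

variable {G F : Type*} [Group G] [Field F] [MulSemiringAction G F] {c : FactorSet G F}

@[ext]
theorem ext {x y : CrossedProduct c} (h : ∀ g, x g = y g) : x = y := funext h

instance : AddCommGroup (CrossedProduct c) := inferInstanceAs (AddCommGroup (G → F))

instance {K : Type*} [Semiring K] [Module K F] : Module K (CrossedProduct c) :=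
  inferInstanceAs (Module K (G → F))

@[simp] theorem zero_apply (g : G) : (0 : CrossedProduct c) g = 0 := rfl

@[simp] theorem add_apply (x y : CrossedProduct c) (g : G) : (x + y) g = x g + y g := rfl

@[simp]
theorem smul_apply {K : Type*} [Semiring K] [Module K F] (k : K) (x : CrossedProduct c) (g : G) :
    (k • x) g = k • x g := rfl

section Mul

variable [Fintype G]

instance : Mul (CrossedProduct c) :=
  ⟨fun x y g ↦ ∑ h, x h * h • y (h⁻¹ * g) * c h (h⁻¹ * g)⟩

theorem mul_apply (x y : CrossedProduct c) (g : G) :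
    (x * y) g = ∑ h, x h * h • y (h⁻¹ * g) * c h (h⁻¹ * g) := rfl

protected theorem mul_assoc (x y z : CrossedProduct c) : x * y * z = x * (y * z) := by
  ext g
  simp only [mul_apply, Finset.sum_mul, Finset.smul_sum, Finset.mul_sum]
  rw [Finset.sum_comm]
  refine Finset.sum_congr rfl fun k _ ↦ ?_
  refine (Fintype.sum_equiv (Equiv.mulLeft k) _ _ fun j ↦ ?_).symm
  have hcocycle := c.cocycle k j (j⁻¹ * (k⁻¹ * g))
  simp only [Equiv.coe_mulLeft, mul_inv_rev, inv_mul_cancel_left, mul_inv_cancel_left, mul_assoc,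
    smul_mul', mul_smul] at hcocycle ⊢
  linear_combination (-x k * k • y j * k • j • z (j⁻¹ * (k⁻¹ * g))) * hcocycle

end Mul

variable [DecidableEq G]

/-- The element `a * u g` of the crossed product. -/
def single (g : G) (a : F) : CrossedProduct c := Pi.single (M := fun _ ↦ F) g a

@[simp]
theorem single_same (g : G) (a : F) : (single g a : CrossedProduct c) g = a :=
  Pi.single_eq_same (M := fun _ ↦ F) g a

theorem single_of_ne {g h : G} (hgh : h ≠ g) (a : F) : (single g a : CrossedProduct c) h = 0 :=
  Pi.single_eq_of_ne (M := fun _ ↦ F) hgh a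

instance : One (CrossedProduct c) := ⟨single 1 1⟩

theorem one_def : (1 : CrossedProduct c) = single 1 1 := rfl

variable [Fintype G]

theorem single_mul_apply (h : G) (a : F) (x : CrossedProduct c) (g : G) :
    (single (c := c) h a * x) g = a * h • x (h⁻¹ * g) * c h (h⁻¹ * g) := by
  rw [mul_apply, Fintype.sum_eq_single h fun k hk ↦ by simp [single_of_ne hk], single_same]

theorem mul_single_apply (x : CrossedProduct c) (h : G) (a : F) (g : G) :
    (x * single (c := c) h a) g = x (g * h⁻¹) * (g * h⁻¹) • a * c (g * h⁻¹) h := by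
  have h_ne {k : G} (hk : k ≠ g * h⁻¹) : k⁻¹ * g ≠ h := by
    rintro rfl
    simp at hk
  rw [mul_apply, Fintype.sum_eq_single (g * h⁻¹) fun k hk ↦ by simp [single_of_ne (h_ne hk)]]
  simp

instance : Ring (CrossedProduct c) where
  __ := (inferInstance : AddCommGroup (CrossedProduct c))
  left_distrib x y z := by ext; simp [mul_apply, mul_add, add_mul, Finset.sum_add_distrib]
  right_distrib x y z := by ext; simp [mul_apply, add_mul, Finset.sum_add_distrib]
  zero_mul x := by ext; simp [mul_apply]
  mul_zero x := by ext; simp [mul_apply]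
  mul_assoc := CrossedProduct.mul_assoc
  one_mul x := by ext; simp [one_def, single_mul_apply]
  mul_one x := by ext; simp [one_def, mul_single_apply]

/-- The embedding of `F` as the coefficients of `u 1 = 1`. -/
def inclusion : F →+* CrossedProduct c where
  toFun := single 1
  map_zero' := Pi.single_zero (M := fun _ ↦ F) 1
  map_one' := rfl
  map_add' := Pi.single_add (f := fun _ ↦ F) 1
  map_mul' a b := by
    ext g
    rw [single_mul_apply]
    by_cases hg : g = 1
    · simp [hg]
    · simp [single_of_ne hg]

instance : Nontrivial (CrossedProduct c) := inferInstanceAs (Nontrivial (G → F))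

theorem inclusion_apply (a : F) : (inclusion a : CrossedProduct c) = single 1 a := rfl

section Algebra

variable {K : Type*} [Field K] [Algebra K F] [SMulCommClass G K F]

instance : Algebra K (CrossedProduct c) :=
  Algebra.ofModule (fun k x y ↦ by ext; simp [mul_apply, Finset.smul_sum])
    (fun k x y ↦ by ext; simp [mul_apply, Finset.smul_sum, smul_comm _ k])

theorem algebraMap_apply (k : K) :
    algebraMap K (CrossedProduct c) k = inclusion (algebraMap K F k) := by
  ext g
  rw [Algebra.algebraMap_eq_smul_one, Algebra.algebraMap_eq_smul_one, inclusion_apply, one_def,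
    smul_apply]
  by_cases hg : g = 1
  · simp [hg]
  · simp [single_of_ne hg]

end Algebra

section Center

variable {K : Type*} [Field K] [Algebra K F] [IsGaloisGroup G K F]

theorem inclusion_mem_range_algebraMap_iff {a : F} :
    (inclusion a : CrossedProduct c) ∈ (algebraMap K (CrossedProduct c)).range ↔
      ∀ g : G, g • a = a := by
  refine ⟨?_, fun h ↦ ?_⟩
  · rintro ⟨k, hk⟩ g
    rw [algebraMap_apply] at hk
    rw [← (inclusion (c := c)).injective hk, smul_algebraMap]
  · obtain ⟨k, rfl⟩ := Algebra.IsInvariant.isInvariant (A := K) a h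
    exact ⟨k, algebraMap_apply k⟩

omit [DecidableEq G] in
theorem apply_eq_zero_of_mem_center [FaithfulSMul G F] {x : CrossedProduct c}
    (hx : ∀ y, y * x = x * y) {g : G} (hg : g ≠ 1) : x g = 0 := by
  classical
  by_contra hxg
  refine hg (eq_of_smul_eq_smul fun a : F ↦ ?_)
  have h := congrFun (hx (single 1 a)) g
  simp only [single_mul_apply, mul_single_apply, inv_one, one_mul, mul_one, one_smul,
    FactorSet.map_one_left, FactorSet.map_one_right, mul_comm a] at h
  rw [one_smul]
  exact (mul_left_cancel₀ hxg h).symm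

omit [DecidableEq G] in
theorem smul_apply_one_of_mem_center {x : CrossedProduct c}
    (hx : ∀ y, y * x = x * y) (g : G) : g • x 1 = x 1 := by
  classical
  simpa [single_mul_apply, mul_single_apply] using congrFun (hx (single g 1)) g

theorem center_eq_bot : Subalgebra.center K (CrossedProduct c) = ⊥ := by
  have := IsGaloisGroup.faithful K (G := G) (B := F)
  refine eq_bot_iff.2 fun x hx ↦ ?_
  have hx := Subalgebra.mem_center_iff.1 hx
  have hxF : x = inclusion (x 1) := by
    ext g
    rw [inclusion_apply]
    by_cases hg : g = 1
    · simp [hg]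
    · rw [single_of_ne hg, apply_eq_zero_of_mem_center hx hg]
  rw [Algebra.mem_bot, hxF]
  exact inclusion_mem_range_algebraMap_iff.2 (smul_apply_one_of_mem_center hx)

theorem finrank_eq_card_sq : Module.finrank K (CrossedProduct c) = Nat.card G ^ 2 := by
  have : FiniteDimensional K F := IsGaloisGroup.finiteDimensional G K F
  rw [sq, show Module.finrank K (CrossedProduct c) = Module.finrank K (G → F) from rfl,
    Module.finrank_pi_fintype, Finset.sum_const, ← IsGaloisGroup.card_eq_finrank G K F,
    Finset.card_univ, Nat.card_eq_fintype_card, smul_eq_mul]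

end Center

section NoZeroDivisors

variable {Γ₀ : Type*} [LinearOrderedCommGroupWithZero Γ₀]

theorem exists_dominant_coefficient {v : Valuation F Γ₀} {ω : G → Γ₀} (hω : ∀ g, ω g ≠ 0)
    (hsep : ∀ {a b : F} {g h : G}, a ≠ 0 → v a * ω g = v b * ω h → g = h)
    {x : CrossedProduct c} (hx : x ≠ 0) :
    ∃ g, x g ≠ 0 ∧ ∀ h ≠ g, v (x h) * ω h < v (x g) * ω g := by
  obtain ⟨g, hmax⟩ := Finite.exists_max fun g ↦ v (x g) * ω g
  have hxg : x g ≠ 0 := by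
    contrapose! hx
    ext h
    simpa [hx, hω] using hmax h
  exact ⟨g, hxg, fun h hhg ↦ (hmax h).lt_of_ne fun heq ↦ hhg (hsep hxg heq.symm).symm⟩

theorem noZeroDivisors (v : Valuation F Γ₀) (ω : G → Γ₀) (hω : ∀ g, ω g ≠ 0)
    (hv : ∀ (g : G) a, v (g • a) = v a)
    (hc : ∀ g h, v (c g h) * ω (g * h) = ω g * ω h)
    (hsep : ∀ {a b : F} {g h : G}, a ≠ 0 → v a * ω g = v b * ω h → g = h) :
    NoZeroDivisors (CrossedProduct c) where
  eq_zero_or_eq_zero_of_mul_eq_zero {x y} hxy := by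
    by_contra! hne
    obtain ⟨a, hxa, ha⟩ := exists_dominant_coefficient hω hsep hne.1
    obtain ⟨b, hyb, hb⟩ := exists_dominant_coefficient hω hsep hne.2
    -- The product of the dominant terms of `x` and `y` dominates the coefficient at `a * b`.
    let term (h : G) : F := x h * h • y (h⁻¹ * (a * b)) * c h (h⁻¹ * (a * b))
    have hterm (h : G) : v (term h) * ω (a * b) =
        v (x h) * ω h * (v (y (h⁻¹ * (a * b))) * ω (h⁻¹ * (a * b))) := by
      have := hc h (h⁻¹ * (a * b))
      rw [mul_inv_cancel_left] at this
      rw [map_mul, map_mul, hv, mul_assoc, this]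
      ac_rfl
    have hb_le (h : G) : v (y h) * ω h ≤ v (y b) * ω b :=
      (eq_or_ne h b).elim (fun h ↦ h ▸ le_rfl) fun h ↦ (hb _ h).le
    have hpos (h : G) : 0 < ω h := zero_lt_iff.2 (hω h)
    have hyb_pos : 0 < v (y b) * ω b := mul_pos (zero_lt_iff.2 (v.ne_zero_iff.2 hyb)) (hpos b)
    have hlt : ∀ h ∈ Finset.univ \ {a}, v (term h) < v (term a) := fun h hh ↦ by
      rw [← mul_lt_mul_iff_left₀ (hpos (a * b)), hterm, hterm, inv_mul_cancel_left]
      exact mul_lt_mul_of_lt_of_le_of_nonneg_of_pos (ha h (by simpa using hh)) (hb_le _)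
        zero_le hyb_pos
    have hsum : v ((x * y) (a * b)) = v (term a) :=
      Valuation.map_sum_eq_of_lt v (Finset.mem_univ a) hlt
    have : v (term a) * ω (a * b) = 0 := by rw [← hsum, hxy, zero_apply, map_zero, zero_mul]
    rw [hterm, inv_mul_cancel_left] at this
    simp [hω, hxa, hyb] at this

end NoZeroDivisors

end CrossedProduct

/-! ### Cyclic algebras over Laurent series fields -/

section CyclicGroup

variable {G : Type*} [Group G] [hG : IsCyclic G]

/-- The discrete logarithm of a finite cyclic group with respect to an arbitrary generator. -/
noncomputable def cyclicLog (g : G) : ℕ := ((zmodCyclicMulEquiv hG).symm g).toAdd.val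

@[simp]
theorem cyclicLog_one : cyclicLog (1 : G) = 0 := by simp [cyclicLog]

variable [Finite G]

theorem cyclicLog_injective : Function.Injective (cyclicLog : G → ℕ) :=
  have : NeZero (Nat.card G) := ⟨Nat.card_pos.ne'⟩
  (ZMod.val_injective _).comp (Multiplicative.toAdd.injective.comp (MulEquiv.injective _))

theorem cyclicLog_lt (g : G) : cyclicLog g < Nat.card G :=
  have : NeZero (Nat.card G) := ⟨Nat.card_pos.ne'⟩
  ZMod.val_lt _

theorem cyclicLog_mul (g h : G) : cyclicLog (g * h) = (cyclicLog g + cyclicLog h) % Nat.card G := by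
  have : NeZero (Nat.card G) := ⟨Nat.card_pos.ne'⟩
  rw [cyclicLog, map_mul, toAdd_mul, ZMod.val_add, cyclicLog, cyclicLog]

/-- The carry that occurs when adding the logarithms of `g` and `h` modulo the order of `G`. -/
noncomputable def carry (g h : G) : ℕ := (cyclicLog g + cyclicLog h) / Nat.card G

theorem card_mul_carry_add_cyclicLog_mul (g h : G) :
    Nat.card G * carry g h + cyclicLog (g * h) = cyclicLog g + cyclicLog h := by
  rw [cyclicLog_mul, carry, Nat.div_add_mod]

theorem carry_mul_add_carry (g h k : G) :
    carry (g * h) k + carry g h = carry h k + carry g (h * k) := by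
  have := card_mul_carry_add_cyclicLog_mul (g * h) k
  have := card_mul_carry_add_cyclicLog_mul g (h * k)
  have := card_mul_carry_add_cyclicLog_mul g h
  have := card_mul_carry_add_cyclicLog_mul h k
  rw [mul_assoc g h k] at *
  exact Nat.eq_of_mul_eq_mul_left (Nat.card_pos (α := G)) (by lia)

variable {F : Type*} [Field F] [MulSemiringAction G F]

/-- The factor set of the cyclic algebra of `G` and the invariant element `t`: if `σ` is the
generator underlying `cyclicLog`, then `u (σ ^ i) = u σ ^ i` for `i < Nat.card G`, and
`u σ ^ Nat.card G = t`. -/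
noncomputable def cyclicFactorSet {t : F} (ht : ∀ g : G, g • t = t) : FactorSet G F where
  toFun g h := t ^ carry g h
  cocycle' g h k := by
    rw [smul_pow', ht, ← pow_add, ← pow_add, carry_mul_add_carry]
  map_one_left' g := by simp [carry, Nat.div_eq_of_lt (cyclicLog_lt g)]
  map_one_right' g := by simp [carry, Nat.div_eq_of_lt (cyclicLog_lt g)]

theorem cyclicFactorSet_apply {t : F} (ht : ∀ g : G, g • t = t) (g h : G) :
    cyclicFactorSet ht g h = t ^ carry g h := rfl

end CyclicGroup

open WithZero in
theorem noZeroDivisors_cyclicAlgebra {G F : Type*} [Group G] [IsCyclic G] [Fintype G]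
    [DecidableEq G] [Field F] [MulSemiringAction G F] (v : Valuation F ℤᵐ⁰)
    (hv : ∀ (g : G) a, v (g • a) = v a) {t : F} (ht : ∀ g : G, g • t = t)
    (hvt : v t = exp (-1)) : NoZeroDivisors (CrossedProduct (cyclicFactorSet ht)) := by
  have hvt0 : v t ≠ 0 := hvt ▸ exp_ne_zero
  let w : Valuation F ℤᵐ⁰ := v.map (powMonoidWithZeroHom (Nat.card_pos (α := G)).ne')
    (pow_left_mono _)
  have hw (a : F) : w a = v a ^ Nat.card G := rfl
  have log_w_mul {a : F} (ha : a ≠ 0) (g : G) :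
      log (w a * v t ^ cyclicLog g) = Nat.card G * log (v a) - cyclicLog g := by
    rw [hw, log_mul (pow_ne_zero _ (v.ne_zero_iff.2 ha)) (pow_ne_zero _ hvt0), log_pow, log_pow,
      hvt, log_exp, nsmul_eq_mul, nsmul_eq_mul, mul_neg_one, sub_eq_add_neg]
  refine CrossedProduct.noZeroDivisors w (fun g ↦ v t ^ cyclicLog g) (fun g ↦ pow_ne_zero _ hvt0)
    (fun g a ↦ by rw [hw, hw, hv]) (fun g h ↦ ?_) fun {a b g h} ha hab ↦ cyclicLog_injective ?_
  · rw [hw, cyclicFactorSet_apply, map_pow, ← pow_mul, ← pow_add, ← pow_add, mul_comm (carry g h),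
      card_mul_carry_add_cyclicLog_mul]
  · have hb : b ≠ 0 := by
      rintro rfl
      simp [hw, ha, hvt0] at hab
    have hlog := congrArg log hab
    rw [log_w_mul ha, log_w_mul hb] at hlog
    have hmod : cyclicLog g ≡ cyclicLog h [MOD Nat.card G] := by
      rw [← Int.natCast_modEq_iff, Int.modEq_iff_dvd]
      exact ⟨log (v b) - log (v a), by linear_combination hlog⟩
    exact hmod.eq_of_lt_of_lt (cyclicLog_lt g) (cyclicLog_lt h)

section LaurentSeries

open LaurentSeries WithZero

variable {G L : Type*} [Group G] [Field L] [MulSemiringAction G L]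

noncomputable instance {Γ R : Type*} [AddCommMonoid Γ] [PartialOrder Γ] [IsOrderedCancelAddMonoid Γ]
    [Semiring R] [MulSemiringAction G R] : MulSemiringAction G (HahnSeries Γ R) where
  smul_one g := HahnSeries.map_one (MulSemiringAction.toRingHom G R g).toMonoidWithZeroHom
  smul_mul g _ _ := HahnSeries.map_mul (MulSemiringAction.toRingHom G R g : R →ₙ+* R)

instance [FaithfulSMul G L] : FaithfulSMul G L⸨X⸩ where
  eq_of_smul_eq_smul {g h} hgh := eq_of_smul_eq_smul fun a : L ↦ by
    simpa using congrArg (HahnSeries.coeff · 0) (hgh (HahnSeries.C a))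

theorem smul_single (g : G) (n : ℤ) (a : L) :
    g • (HahnSeries.single n a : L⸨X⸩) = HahnSeries.single n (g • a) :=
  HahnSeries.map_single (MulSemiringAction.toRingHom G L g).toMonoidWithZeroHom.toZeroHom

theorem valuation_smul_le (g : G) (f : L⸨X⸩) :
    (Valued.v (g • f) : ℤᵐ⁰) ≤ Valued.v f := by
  obtain rfl | hf := eq_or_ne f 0
  · simp
  have hvf : (Valued.v f : ℤᵐ⁰) ≠ 0 := Valued.v.ne_zero_iff.2 hf
  rw [valuation_le_iff_coeff_lt_log_eq_zero _ hvf]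
  intro n hn
  rw [HahnSeries.coeff_smul, (valuation_le_iff_coeff_lt_log_eq_zero _ hvf).1 le_rfl n hn, smul_zero]

theorem valuation_smul (g : G) (f : L⸨X⸩) : (Valued.v (g • f) : ℤᵐ⁰) = Valued.v f :=
  (valuation_smul_le g f).antisymm <| by simpa using valuation_smul_le g⁻¹ (g • f)

end LaurentSeries

/-- The natural number `n` is the order of an element of `Aˣ ⧸ Kˣ` for some central division
algebra `A` of degree `d`, that is of dimension `d ^ 2`, over a field `K` of characteristic zero. -/
def IsRealizedInDegree (d n : ℕ) : Prop :=
  ∃ (K A : Type) (_ : Field K) (_ : CharZero K) (_ : DivisionRing A) (_ : Algebra K A),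
    Subalgebra.center K A = ⊥ ∧ Module.finrank K A = d ^ 2 ∧
      ∃ g : Aˣ ⧸ centralUnits K A, orderOf g = n

theorem isRealizedInDegree_card_of_noZeroDivisors {G K F : Type} [Group G] [Fintype G]
    [DecidableEq G] [Field K] [CharZero K] [Field F] [Algebra K F] [MulSemiringAction G F]
    [IsGaloisGroup G K F] (c : FactorSet G F) [NoZeroDivisors (CrossedProduct c)] {a : F}
    (ha : a ≠ 0) {n : ℕ} (han : ∀ j, (∀ g : G, g • a ^ j = a ^ j) ↔ n ∣ j) :
    IsRealizedInDegree (Nat.card G) n := by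
  have hdim : Module.finrank K (CrossedProduct c) = Nat.card G ^ 2 :=
    CrossedProduct.finrank_eq_card_sq
  have : FiniteDimensional K (CrossedProduct c) := .of_finrank_pos (hdim ▸ pow_pos Nat.card_pos 2)
  have : IsDomain (CrossedProduct c) := NoZeroDivisors.to_isDomain _
  let _ : DivisionRing (CrossedProduct c) := divisionRingOfFiniteDimensional K _
  let x : (CrossedProduct c)ˣ := Units.map CrossedProduct.inclusion.toMonoidHom (Units.mk0 a ha)
  refine ⟨K, CrossedProduct c, inferInstance, inferInstance, inferInstance, inferInstance,
    CrossedProduct.center_eq_bot, hdim, QuotientGroup.mk x, Nat.dvd_right_iff_eq.1 fun j ↦ ?_⟩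
  rw [← pow_mem_range_iff_orderOf_dvd, ← han,
    ← CrossedProduct.inclusion_mem_range_algebraMap_iff (c := c) (K := K), map_pow]
  rfl

theorem forall_smul_pow_eq_iff {G L : Type*} [Group G] [Field L] [MulSemiringAction G L] {σ : G}
    (hσ : ∀ τ, τ ∈ Subgroup.zpowers σ) {x : L} (hx : x ≠ 0) (j : ℕ) :
    (∀ τ : G, τ • x ^ j = x ^ j) ↔ (x / σ • x) ^ j = 1 := by
  have hσx : (σ • x) ^ j ≠ 0 := pow_ne_zero j ((smul_ne_zero_iff_ne σ).2 hx)
  rw [div_pow, div_eq_one_iff_eq hσx, ← smul_pow']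
  refine ⟨fun h ↦ (h σ).symm, fun h τ ↦ ?_⟩
  exact (Subgroup.zpowers_le (H := MulAction.stabilizer G (x ^ j))).2 h.symm (hσ τ)

open LaurentSeries in
theorem isRealizedInDegree_orderOf {k L : Type} [Field k] [Field L] [CharZero L] [Algebra k L]
    [FiniteDimensional k L] [IsGalois k L] {σ : Gal(L/k)} (hσ : ∀ τ, τ ∈ Subgroup.zpowers σ)
    {ζ : L} (hζ : Algebra.norm k ζ = 1) :
    IsRealizedInDegree (Module.finrank k L) (orderOf ζ) := by
  classical
  have : IsCyclic Gal(L/k) := ⟨σ, hσ⟩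
  have : CharZero L⸨X⸩ := charZero_of_injective_ringHom HahnSeries.C_injective
  obtain ⟨x, hx⟩ := groupCohomology.exists_div_of_norm_eq_one hσ hζ
  have ht (τ : Gal(L/k)) : τ • (HahnSeries.single 1 1 : L⸨X⸩) = HahnSeries.single 1 1 := by
    rw [smul_single, smul_one]
  have : NoZeroDivisors (CrossedProduct (cyclicFactorSet ht)) :=
    noZeroDivisors_cyclicAlgebra Valued.v valuation_smul ht
      (LaurentSeries.valuation_single_zpow L 1)
  rw [← IsGalois.card_aut_eq_finrank]
  refine isRealizedInDegree_card_of_noZeroDivisors (K := FixedPoints.subfield Gal(L/k) L⸨X⸩)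
    (cyclicFactorSet ht) (a := HahnSeries.C (x : L)) (HahnSeries.C_ne_zero x.ne_zero) fun j ↦ ?_
  rw [orderOf_dvd_iff_pow_eq_one, ← hx, ← AlgEquiv.smul_def, ← forall_smul_pow_eq_iff hσ x.ne_zero]
  refine forall_congr' fun τ ↦ ?_
  rw [← map_pow, HahnSeries.C_apply, smul_single, (HahnSeries.single_injective 0).eq_iff]

section GaloisOrbit

open IntermediateField

variable {F L : Type*} [Field F] [Field L] [Algebra F L] [FiniteDimensional F L]

theorem mem_zpowers_subgroupEquivAlgEquiv (σ : Gal(L/F))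
    (τ : Gal(L/fixedField (Subgroup.zpowers σ))) :
    τ ∈ Subgroup.zpowers
      (subgroupEquivAlgEquiv (Subgroup.zpowers σ) ⟨σ, Subgroup.mem_zpowers σ⟩) := by
  obtain ⟨⟨-, j, rfl⟩, rfl⟩ := (subgroupEquivAlgEquiv (Subgroup.zpowers σ)).surjective τ
  exact ⟨j, (map_zpow _ _ j).symm⟩

theorem algebraMap_norm_fixedField_zpowers [IsGalois F L] (σ : Gal(L/F)) (x : L) :
    algebraMap _ L (Algebra.norm (fixedField (Subgroup.zpowers σ)) x) =
      ∏ i ∈ Finset.range (orderOf σ), (σ ^ i) x := by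
  classical
  rw [Algebra.norm_eq_prod_automorphisms,
    ← (subgroupEquivAlgEquiv (Subgroup.zpowers σ)).toEquiv.prod_comp,
    ← (finEquivZPowers (isOfFinOrder_of_finite σ)).prod_comp,
    ← Fin.prod_univ_eq_prod_range (fun i ↦ (σ ^ i) x)]
  rfl

end GaloisOrbit

theorem isRealizedInDegree_of_prod_eq_one {F L : Type} [Field F] [Field L] [CharZero L]
    [Algebra F L] [FiniteDimensional F L] [IsGalois F L] {σ : Gal(L/F)} {ζ : L}
    (h : ∏ i ∈ Finset.range (orderOf σ), (σ ^ i) ζ = 1) :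
    IsRealizedInDegree (orderOf σ) (orderOf ζ) := by
  rw [← Nat.card_zpowers, ← IntermediateField.finrank_fixedField_eq_card]
  refine isRealizedInDegree_orderOf (mem_zpowers_subgroupEquivAlgEquiv σ)
    (FaithfulSMul.algebraMap_injective _ L ?_)
  rw [algebraMap_norm_fixedField_zpowers, h, map_one]

open IsCyclotomicExtension Rat in
theorem galEquivZMod_symm_pow_apply {n : ℕ} [NeZero n] {L : Type*} [Field L] [NumberField L]
    [IsCyclotomicExtension {n} ℚ L] (s : (ZMod n)ˣ) {ζ : L} (hζ : ζ ^ n = 1) (i : ℕ) :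
    ((galEquivZMod n L).symm s ^ i) ζ = ζ ^ ((s : ZMod n) ^ i).val := by
  rw [← map_pow, galEquivZMod_apply_of_pow_eq n L _ hζ, MulEquiv.apply_symm_apply,
    Units.val_pow_eq_pow_val]

open IsCyclotomicExtension Rat in
theorem isRealizedInDegree_of_geom_sum_eq_zero {n : ℕ} [NeZero n] {s : (ZMod n)ˣ}
    (hs : ∑ i ∈ Finset.range (orderOf s), (s : ZMod n) ^ i = 0) :
    IsRealizedInDegree (orderOf s) n := by
  let L := CyclotomicField n ℚ
  have : IsCyclotomicExtension {n} ℚ L := CyclotomicField.isCyclotomicExtension n ℚ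
  have : IsGalois ℚ L := isGalois {n} ℚ L
  obtain ⟨ζ, hζ⟩ := exists_isPrimitiveRoot ℚ L (Set.mem_singleton n) (NeZero.ne n)
  have horder : orderOf ((galEquivZMod n L).symm s) = orderOf s := MulEquiv.orderOf_eq _ s
  have hprod : ∏ i ∈ Finset.range (orderOf s), ((galEquivZMod n L).symm s ^ i) ζ = 1 := by
    simp_rw [galEquivZMod_symm_pow_apply s hζ.pow_eq_one]
    rw [Finset.prod_pow_eq_pow_sum, hζ.pow_eq_one_iff_dvd, ← ZMod.natCast_eq_zero_iff,
      Nat.cast_sum, ← hs]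
    exact Finset.sum_congr rfl fun i _ ↦ ZMod.natCast_zmod_val _
  have := isRealizedInDegree_of_prod_eq_one (horder.symm ▸ hprod)
  rwa [horder, ← hζ.eq_orderOf] at this

/-! ### Roots of unity of order `ℓ` modulo `n` -/

theorem geom_sum_eq_zero_of_pow_eq_one {R : Type*} [CommRing R] [IsLocalRing R] {n : ℕ}
    (hn : IsUnit (n : R)) {s : R} (hs : s ^ n = 1) (hs1 : s ≠ 1) :
    ∑ i ∈ Finset.range n, s ^ i = 0 := by
  have hmul : (∑ i ∈ Finset.range n, s ^ i) * (s - 1) = 0 := by rw [geom_sum_mul, hs, sub_self]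
  have hdvd : s - 1 ∣ ∑ i ∈ Finset.range n, s ^ i - n := by
    have hn : (n : R) = ∑ i ∈ Finset.range n, 1 := by simp
    rw [hn, ← Finset.sum_sub_distrib]
    exact Finset.dvd_sum fun i _ ↦ sub_one_dvd_pow_sub_one s i
  rcases IsLocalRing.isUnit_or_isUnit_of_isUnit_add
    (a := ∑ i ∈ Finset.range n, s ^ i) (b := n - ∑ i ∈ Finset.range n, s ^ i)
    (by rwa [add_sub_cancel]) with h | h
  · exact absurd (sub_eq_zero.1 (h.mul_right_eq_zero.1 hmul)) hs1
  · exact (isUnit_of_dvd_unit (dvd_sub_comm.1 hdvd) h).mul_left_eq_zero.1 hmul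

theorem isLocalRing_zmod_prime_pow {p k : ℕ} (hp : p.Prime) (hk : k ≠ 0) :
    IsLocalRing (ZMod (p ^ k)) := by
  have : Fact p.Prime := ⟨hp⟩
  have : Fact (1 < p ^ k) := ⟨Nat.one_lt_pow hk hp.one_lt⟩
  exact .of_surjective' (PadicInt.toZModPow k) (ZMod.ringHom_surjective _)

theorem exists_geom_sum_eq_zero_zmod_prime_pow {ℓ p k : ℕ} (hℓ : ℓ.Prime) (hp : p.Prime)
    (hpℓ : p % ℓ = 1) (hk : k ≠ 0) : ∃ s : ZMod (p ^ k), ∑ i ∈ Finset.range ℓ, s ^ i = 0 := by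
  have : Fact ℓ.Prime := ⟨hℓ⟩
  have : NeZero (p ^ k) := ⟨pow_ne_zero k hp.ne_zero⟩
  have : IsLocalRing (ZMod (p ^ k)) := isLocalRing_zmod_prime_pow hp hk
  have hdvd : ℓ ∣ Nat.card (ZMod (p ^ k))ˣ := by
    rw [Nat.card_eq_fintype_card, ZMod.card_units_eq_totient,
      Nat.totient_prime_pow hp (Nat.pos_of_ne_zero hk)]
    exact ((Nat.modEq_iff_dvd' hp.one_le).1 (hpℓ.trans (Nat.mod_eq_of_lt hℓ.one_lt).symm).symm)
      |>.mul_left _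
  obtain ⟨u, hu⟩ := exists_prime_orderOf_dvd_card' (G := (ZMod (p ^ k))ˣ) ℓ hdvd
  have hunit : IsUnit (ℓ : ZMod (p ^ k)) := by
    refine (ZMod.isUnit_iff_coprime ℓ _).2 (((Nat.coprime_primes hℓ hp).2 ?_).pow_right k)
    rintro rfl
    simp at hpℓ
  refine ⟨u, geom_sum_eq_zero_of_pow_eq_one hunit ?_ fun h ↦ ?_⟩
  · rw [← Units.val_pow_eq_pow_val, ← hu, pow_orderOf_eq_one, Units.val_one]
  · rw [Units.val_eq_one.1 h, orderOf_one] at hu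
    exact hℓ.ne_one hu.symm

theorem exists_geom_sum_eq_zero_zmod {ℓ n : ℕ} (hℓ : ℓ.Prime) (hn : 0 < n) (hsq : ¬ ℓ ^ 2 ∣ n)
    (h : ∀ p : ℕ, p.Prime → p ∣ n → p = ℓ ∨ p % ℓ = 1) :
    ∃ s : ZMod n, ∑ i ∈ Finset.range ℓ, s ^ i = 0 := by
  induction n using Nat.recOnPosPrimePosCoprime with
  | prime_pow p k hp hk =>
    rcases h p hp (dvd_pow_self p hk.ne') with rfl | hpℓ
    · obtain rfl : k = 1 := by
        by_contra hk1
        exact hsq (pow_dvd_pow p (by lia))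
      exact ⟨1, by simp [ZMod.natCast_eq_zero_iff]⟩
    · exact exists_geom_sum_eq_zero_zmod_prime_pow hℓ hp hpℓ hk.ne'
  | zero => exact absurd hn (lt_irrefl 0)
  | one => exact ⟨0, Subsingleton.elim _ _⟩
  | coprime a b ha hb hab iha ihb =>
    obtain ⟨s, hs⟩ := iha (by lia) (fun h' ↦ hsq (h'.mul_right b))
      fun p hp hd ↦ h p hp (hd.mul_right b)
    obtain ⟨r, hr⟩ := ihb (by lia) (fun h' ↦ hsq (h'.mul_left a))
      fun p hp hd ↦ h p hp (hd.mul_left a)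
    refine ⟨(ZMod.chineseRemainder hab).symm (s, r), ?_⟩
    simp_rw [← map_pow, ← map_sum, EmbeddingLike.map_eq_zero_iff]
    ext
    · simpa only [Prod.fst_sum, Prod.pow_fst, Prod.fst_zero] using hs
    · simpa only [Prod.snd_sum, Prod.pow_snd, Prod.snd_zero] using hr

theorem exists_units_orderOf_eq_of_geom_sum_eq_zero {ℓ n : ℕ} (hℓ : ℓ.Prime) (hn : ℓ < n)
    {s : ZMod n} (hs : ∑ i ∈ Finset.range ℓ, s ^ i = 0) :
    ∃ u : (ZMod n)ˣ, u = s ∧ orderOf u = ℓ := by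
  have : Fact ℓ.Prime := ⟨hℓ⟩
  have hpow : s ^ ℓ = 1 := by rw [← sub_eq_zero, ← geom_sum_mul, hs, zero_mul]
  refine ⟨Units.ofPowEqOne s ℓ hpow hℓ.ne_zero, rfl,
    orderOf_eq_prime (Units.pow_ofPowEqOne hpow hℓ.ne_zero) fun h ↦ ?_⟩
  obtain rfl : s = 1 := congrArg Units.val h
  rw [Finset.sum_congr rfl fun i _ ↦ one_pow i] at hs
  rw [Finset.sum_const, Finset.card_range, nsmul_one, ZMod.natCast_eq_zero_iff] at hs
  exact (Nat.le_of_dvd hℓ.pos hs).not_gt hn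

theorem IsRealizedInDegree.of_dvd {d m n : ℕ} (hm : m ≠ 0) (h : IsRealizedInDegree d m)
    (hnm : n ∣ m) : IsRealizedInDegree d n := by
  obtain ⟨K, A, _, _, _, _, hc, hdim, g, rfl⟩ := h
  obtain ⟨q, hq⟩ := hnm
  refine ⟨K, A, _, ‹_›, _, _, hc, hdim, g ^ q, ?_⟩
  rw [orderOf_pow_of_dvd (right_ne_zero_of_mul (hq ▸ hm)) ⟨n, by lia⟩, hq,
    Nat.mul_div_cancel _ (Nat.pos_of_ne_zero (right_ne_zero_of_mul (hq ▸ hm)))]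

theorem isRealizedInDegree_of_not_sq_dvd {ℓ n : ℕ} (hℓ : ℓ.Prime) (hn : 0 < n)
    (hsq : ¬ ℓ ^ 2 ∣ n) (h : ∀ p : ℕ, p.Prime → p ∣ n → p = ℓ ∨ p % ℓ = 1) :
    IsRealizedInDegree ℓ n := by
  -- A root of `1 + s + ⋯ + s ^ (ℓ - 1)` modulo `q * n > ℓ` cannot be `1`, so it has order `ℓ`.
  obtain ⟨q, hq, hlt, hqℓ⟩ := Nat.exists_prime_gt_modEq_one ℓ hℓ.ne_zero
  have hqℓ : q % ℓ = 1 := Eq.trans hqℓ (Nat.mod_eq_of_lt hℓ.one_lt)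
  have hm : 0 < q * n := Nat.mul_pos hq.pos hn
  have hcop : (ℓ ^ 2).Coprime q := ((Nat.coprime_primes hℓ hq).2 hlt.ne).pow_left 2
  obtain ⟨s, hs⟩ := exists_geom_sum_eq_zero_zmod hℓ hm (fun h' ↦ hsq (hcop.dvd_of_dvd_mul_left h'))
    fun p hp hpm ↦ (hp.dvd_mul.1 hpm).elim
      (fun hpq ↦ .inr ((Nat.prime_dvd_prime_iff_eq hp hq).1 hpq ▸ hqℓ)) (h p hp)
  obtain ⟨u, rfl, hu⟩ := exists_units_orderOf_eq_of_geom_sum_eq_zero hℓ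
    (hlt.trans_le (Nat.le_mul_of_pos_right q hn)) hs
  have : NeZero (q * n) := ⟨hm.ne'⟩
  have := isRealizedInDegree_of_geom_sum_eq_zero (hu ▸ hs)
  exact (hu ▸ this).of_dvd hm.ne' (dvd_mul_left n q)

end CentralDivisionAlgebra

open CentralDivisionAlgebra in
theorem stmt_18_general {ℓ : ℕ} (hℓ : ℓ.Prime) (hodd : ℓ ≠ 2) {n : ℕ} (hn : 0 < n) :
    IsRealizedInDegree ℓ n ↔ ¬ ℓ ^ 2 ∣ n ∧ ∀ p : ℕ, p.Prime → p ∣ n → p = ℓ ∨ p % ℓ = 1 := by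
  constructor
  · rintro ⟨K, A, _, _, _, _, hc, hdim, g, rfl⟩
    have hg := orderOf_pos_iff.1 hn
    exact ⟨not_sq_dvd_orderOf hℓ hc hdim hodd hg,
      fun p hp ↦ eq_or_mod_eq_one_of_dvd_orderOf hℓ hc hdim hg hp⟩
  · rintro ⟨hsq, h⟩
    exact isRealizedInDegree_of_not_sq_dvd hℓ hn hsq h

/-- Let `n` be a positive integer. There exist a field `K` of characteristic zero and a
central division algebra `A` of dimension `9` over `K` such that the group `Aˣ/Kˣ` contains
an element of order `n`, if and only if `n` is not divisible by `9` and every prime divisor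
of `n` is either `3` or congruent to `1` modulo `3`. -/
theorem stmt_18 (n : ℕ) (hn : 0 < n) :
    (∃ (D : CentralDivAlgChar0) (g : D.Q), orderOf g = n) ↔
      (¬ (9 ∣ n) ∧ ∀ p : ℕ, p.Prime → p ∣ n → p = 3 ∨ p % 3 = 1) := by
  refine .trans ⟨fun ⟨D, h⟩ ↦ ?_, fun ⟨K, A, _, _, _, _, hc, hdim, h⟩ ↦ ⟨⟨K, A, hc, hdim⟩, h⟩⟩
    (stmt_18_general Nat.prime_three (by decide) hn)
  exact ⟨D.K, D.A, _, D.charZeroK, _, _, D.center_eq_bot, D.finrank_eq_nine, h⟩
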